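/- arXiv:2312.00602 — 2 statements merged into one kernel-verified Lean document; each statement's English description precedes it below -/
import Mathlib

section
/- Let n ≥ 3 be odd and let τ ∈ ℂ[t_1, t_3, t_5, …] be a nonzero polynomial. Then τ satisfies Ω_0(τ) = τ(t)τ(t') together with ∂τ/∂t_n = 0 if and only if τ satisfies Ω_0(τ) = τ(t)τ(t') together with Ω_{−pn}(τ) = 0 for every integer p ≥ 1. -/
/-- Elementary Schur polynomials `s_m`, defined in any associative `ℂ`-algebra by the
generating-function recursion `m*s_m = ∑_{k=1}^m k*x_k*s_{m-k}`, which for commuting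
arguments is equivalent to `exp(∑_{k≥1} x_k z^k) = ∑_{m≥0} s_m(x) z^m`.
The argument sequence is indexed so that `x (k+1)` is `x_{k+1}`; `x 0` is ignored. -/
noncomputable def schur {A : Type*} [Ring A] [Algebra ℂ A] (x : ℕ → A) : ℕ → A
  | 0 => 1
  | m + 1 =>
      ((m + 1 : ℂ))⁻¹ • ∑ k ∈ Finset.range (m + 1), ((k + 1 : ℂ)) • (x (k + 1) * schur x (m - k))
  decreasing_by exact Nat.lt_succ_of_le (Nat.sub_le m k)

/-- `R`: polynomial ring ℂ[t₁,t₃,t₅,…]; variable `i : ℕ` stands for `t_{2i+1}`. -/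
abbrev ROdd : Type := MvPolynomial ℕ ℂ

/-- `ℂ[t,t']`: `Sum.inl i` is `t_{2i+1}`, `Sum.inr i` is `t'_{2i+1}`. -/
abbrev RTwo : Type := MvPolynomial (ℕ ⊕ ℕ) ℂ

/-- `τ(t)·τ(t') ∈ ℂ[t,t']`. -/
noncomputable def doubling (τ : ROdd) : RTwo :=
  MvPolynomial.rename Sum.inl τ * MvPolynomial.rename Sum.inr τ

/-- The sequence ã with `ã_{2j-1} = t_{2j-1} - t'_{2j-1}` and `ã_{2j} = 0`. -/
noncomputable def aSeq : ℕ → RTwo := fun j =>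
  if Odd j then MvPolynomial.X (Sum.inl ((j - 1) / 2)) - MvPolynomial.X (Sum.inr ((j - 1) / 2))
  else 0

/-- The commuting derivations b̃ with
`b̃_{2j-1} = (2/(2j-1)) (∂/∂t'_{2j-1} - ∂/∂t_{2j-1})` and `b̃_{2j} = 0`. -/
noncomputable def bSeq : ℕ → Module.End ℂ RTwo := fun j =>
  if Odd j then
    ((2 : ℂ) / (j : ℂ)) •
      ((MvPolynomial.pderiv (Sum.inr ((j - 1) / 2))).toLinearMap -
        (MvPolynomial.pderiv (Sum.inl ((j - 1) / 2))).toLinearMap)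
  else 0

/-- `Ω_{-M}(τ) = ∑_{k≥0} s_k(ã) · s_{k+M}(b̃)(τ(t)τ(t'))`. -/
noncomputable def OmegaNeg (M : ℕ) (τ : ROdd) : RTwo :=
  ∑ᶠ k : ℕ, schur aSeq k * (schur bSeq (k + M)) (doubling τ)

/-!
Put `Ω_{-M}(F) = ∑_k s_k(ã) s_{k+M}(b̃) F` for any `F ∈ ℂ[t,t']`. As `∂/∂t_n` commutes with `b̃`
and sends `s_k(ã)` to `s_{k-n}(ã)`,
`∂/∂t_n Ω_{-M}(F) = Ω_{-M-n}(F) + Ω_{-M}(∂F/∂t_n)`.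
Starting from the bilinear identity and applying this repeatedly, `∂τ/∂t_n = 0` gives
`Ω_{-pn}(τ) = 0` for all `p ≥ 1`.

Conversely, `Ω_{-n}(τ) = 0` says that `f(t) τ(t')`, where `f = ∂τ/∂t_n`, also satisfies the
bilinear identity `Ω_0(F) = F`. Differentiating the latter by `t_j` and setting `t' = t` yields
`s_j(b̃) F = 0` on the diagonal. If `f/τ` does not depend on `t_i` for `i < j`, then
`s_j(b̃) - b̃_j` commutes with multiplication by `f(t)/τ(t)`, so that comparing
`F = f(t) τ(t')` with `F = τ(t) τ(t')` leaves only the Wronskian of `f` and `τ` in `t_j`, which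
must vanish: `f/τ` does not depend on `t_j` either. In particular `∂/∂t_n` multiplies `τ` by a
factor that does not depend on `t_n`, and being locally nilpotent, it kills `τ`.
-/

namespace BKP

open Filter MvPolynomial

section Schur

variable {A : Type*} [Ring A] [Algebra ℂ A]

theorem schur_zero (x : ℕ → A) : schur x 0 = 1 := by
  rw [schur]

theorem schur_succ (x : ℕ → A) (m : ℕ) :
    schur x (m + 1) = (m + 1 : ℂ)⁻¹ •
      ∑ k ∈ Finset.range (m + 1), (k + 1 : ℂ) • (x (k + 1) * schur x (m - k)) := by
  rw [schur]

theorem natCast_smul_schur (x : ℕ → A) (m : ℕ) :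
    (m : ℂ) • schur x m =
      ∑ k ∈ Finset.range m, (k + 1 : ℂ) • (x (k + 1) * schur x (m - (k + 1))) := by
  cases m with
  | zero => simp
  | succ m =>
    simp only [schur_succ x m, Nat.cast_succ, smul_inv_smul₀ (Nat.cast_add_one_ne_zero (R := ℂ) m),
      Nat.add_sub_add_right]

theorem schur_mem (S : Subalgebra ℂ A) {x : ℕ → A} {m : ℕ} (hx : ∀ j ∈ Set.Icc 1 m, x j ∈ S) :
    schur x m ∈ S := by
  induction m using Nat.strong_induction_on with
  | _ m ih =>
    cases m with
    | zero => exact schur_zero x ▸ S.one_mem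
    | succ m =>
      rw [schur_succ]
      refine S.smul_mem (S.sum_mem fun k hk => S.smul_mem (S.mul_mem (hx _ ?_) ?_) _) _
      · have := Finset.mem_range.1 hk
        exact ⟨by lia, by lia⟩
      · exact ih _ (by lia) fun j hj => hx j ⟨hj.1, by have := hj.2; lia⟩

theorem schur_sub_mem (S : Subalgebra ℂ A) {x : ℕ → A} {m : ℕ} (hm : m ≠ 0)
    (hx : ∀ j ∈ Set.Ico 1 m, x j ∈ S) : schur x m - x m ∈ S := by
  obtain ⟨m, rfl⟩ := Nat.exists_eq_succ_of_ne_zero hm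
  rw [Nat.succ_eq_add_one, schur_succ, Finset.sum_range_succ, Nat.sub_self, schur_zero, mul_one,
    smul_add, inv_smul_smul₀ (Nat.cast_add_one_ne_zero m), add_sub_cancel_right]
  refine S.smul_mem (S.sum_mem fun k hk => S.smul_mem (S.mul_mem (hx _ ?_) ?_) _) _
  · have := Finset.mem_range.1 hk
    exact ⟨by lia, by lia⟩
  · exact schur_mem S fun j hj => hx j ⟨hj.1, by have := hj.2; lia⟩

theorem commute_schur {T : A} {x : ℕ → A} (hT : ∀ j, Commute T (x j)) (m : ℕ) :
    Commute T (schur x m) :=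
  Subalgebra.mem_centralizer_iff ℂ |>.1
    (schur_mem (Subalgebra.centralizer ℂ {T}) fun j _ =>
      Subalgebra.mem_centralizer_iff ℂ |>.2 (by rintro _ rfl; exact hT j)) T rfl

theorem map_schur_eq_zero {B : Type*} [Ring B] [Algebra ℂ B] (φ : A →ₐ[ℂ] B) {x : ℕ → A}
    (hx : ∀ j, φ (x j) = 0) {m : ℕ} (hm : m ≠ 0) : φ (schur x m) = 0 := by
  obtain ⟨m, rfl⟩ := Nat.exists_eq_succ_of_ne_zero hm
  simp [schur_succ, hx]

theorem schur_apply_mem {M : Type*} [AddCommGroup M] [Module ℂ M] {x : ℕ → Module.End ℂ M}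
    {W : ℕ → Submodule ℂ M} (hx : ∀ j d, ∀ v ∈ W d, x j v ∈ W (d - j)) (m : ℕ) {d : ℕ} {v : M}
    (hv : v ∈ W d) : schur x m v ∈ W (d - m) := by
  induction m using Nat.strong_induction_on with
  | _ m ih =>
    cases m with
    | zero => simpa [schur_zero] using hv
    | succ m =>
      simp only [schur_succ, LinearMap.smul_apply, LinearMap.sum_apply, Module.End.mul_apply]
      refine Submodule.smul_mem _ _ (Submodule.sum_mem _ fun k hk => Submodule.smul_mem _ _ ?_)
      have hk := Finset.mem_range.1 hk
      have hmem := hx (k + 1) _ _ (ih (m - k) (by lia))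
      rwa [show d - (m - k) - (k + 1) = d - (m + 1) by lia] at hmem

end Schur

section VertexCoeff

variable {A : Type*} [CommRing A] [Algebra ℂ A]

theorem derivation_schur_eq_zero (D : Derivation ℂ A A) {x : ℕ → A} {m : ℕ}
    (hD : ∀ j ∈ Set.Icc 1 m, D (x j) = 0) : D (schur x m) = 0 :=
  Derivation.eqOn_adjoin (D2 := 0) (s := x '' Set.Icc 1 m) (by rintro _ ⟨j, hj, rfl⟩; exact hD j hj)
    (schur_mem _ fun _ hj => Algebra.subset_adjoin ⟨_, hj, rfl⟩)

theorem natCast_smul_derivation_schur (D : Derivation ℂ A A) (x : ℕ → A) (m : ℕ) :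
    (m : ℂ) • D (schur x m) =
      ∑ k ∈ Finset.range m, (k + 1 : ℂ) • (x (k + 1) * D (schur x (m - (k + 1)))) +
        ∑ k ∈ Finset.range m, (k + 1 : ℂ) • (schur x (m - (k + 1)) * D (x (k + 1))) := by
  rw [← D.map_smul, natCast_smul_schur, map_sum, ← Finset.sum_add_distrib]
  simp only [Derivation.map_smul, Derivation.leibniz, smul_eq_mul, smul_add]

theorem derivation_schur_add {D : Derivation ℂ A A} {x : ℕ → A} {n : ℕ} (hn : n ≠ 0)
    (hD : ∀ j, D (x j) = if j = n then 1 else 0) (m : ℕ) : D (schur x (m + n)) = schur x m := by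
  induction m using Nat.strong_induction_on with
  | _ m ih =>
    have hschur : ∑ k ∈ Finset.range (m + n),
        (k + 1 : ℂ) • (x (k + 1) * D (schur x (m + n - (k + 1)))) = (m : ℂ) • schur x m := by
      rw [Finset.sum_range_add, natCast_smul_schur,
        Finset.sum_eq_zero (s := Finset.range n) fun k _ => ?_, add_zero]
      · refine Finset.sum_congr rfl fun k hk => ?_
        have hk := Finset.mem_range.1 hk
        rw [show m + n - (k + 1) = m - (k + 1) + n by lia, ih _ (by lia)]
      · rw [derivation_schur_eq_zero D fun j hj => ?_, mul_zero, smul_zero]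
        rw [hD, if_neg (by have := hj.2; lia)]
    have hx : ∑ k ∈ Finset.range (m + n),
        (k + 1 : ℂ) • (schur x (m + n - (k + 1)) * D (x (k + 1))) = (n : ℂ) • schur x m := by
      rw [Finset.sum_eq_single_of_mem (n - 1) (Finset.mem_range.2 (by lia)) fun k _ hk => ?_]
      · rw [hD, if_pos (by lia), mul_one, ← Nat.cast_succ, Nat.succ_eq_add_one,
          Nat.sub_add_cancel (by lia), Nat.add_sub_cancel]
      · rw [hD, if_neg (by lia), mul_zero, smul_zero]
    have hmn : ((m + n : ℕ) : ℂ) ≠ 0 := Nat.cast_ne_zero.2 (by lia)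
    refine smul_right_injective A hmn ?_
    dsimp only
    rw [natCast_smul_derivation_schur, hschur, hx, Nat.cast_add, add_smul]

/-- The coefficient `∑_k s_k(a) s_{k+M}(b) F` of `z^{-M}` in
`exp(∑_k a_k z^k) exp(∑_k b_k z^{-k}) F`, for elements `a_k` of a commutative algebra `A` and linear
operators `b_k` on `A`. With `F = τ(t) τ(t')` it is `Ω_{-M}(τ)`. The sum is finite when
`s_l(b) F = 0` for large `l`; if it has infinite support, `finsum` returns `0`. -/
noncomputable def vertexCoeff (a : ℕ → A) (b : ℕ → Module.End ℂ A) (M : ℕ) (F : A) : A :=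
  ∑ᶠ k : ℕ, schur a k * schur b (k + M) F

variable {a : ℕ → A} {b : ℕ → Module.End ℂ A}

theorem vertexCoeff_zero (M : ℕ) : vertexCoeff a b M 0 = 0 := by
  simp [vertexCoeff]

theorem vertexCoeff_eq_sum_range (M : ℕ) {F : A} {N : ℕ} (hN : ∀ l ≥ N, schur b l F = 0) :
    vertexCoeff a b M F = ∑ k ∈ Finset.range N, schur a k * schur b (k + M) F := by
  refine finsum_eq_sum_of_support_subset _ fun k hk => ?_
  contrapose! hk
  have hk : N ≤ k := by simpa using hk
  simp [hN (k + M) (by lia)]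

theorem derivation_schur_apply {D : Derivation ℂ A A} (hb : ∀ j, Commute (D : Module.End ℂ A) (b j))
    (l : ℕ) (F : A) : D (schur b l F) = schur b l (D F) :=
  LinearMap.congr_fun (commute_schur hb l) F

theorem derivation_vertexCoeff {D : Derivation ℂ A A} {n : ℕ} (hn : n ≠ 0)
    (ha : ∀ j, D (a j) = if j = n then 1 else 0) (hb : ∀ j, Commute (D : Module.End ℂ A) (b j))
    (M : ℕ) {F : A} (hF : ∀ᶠ l in atTop, schur b l F = 0) :
    D (vertexCoeff a b M F) = vertexCoeff a b (M + n) F + vertexCoeff a b M (D F) := by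
  obtain ⟨N, hN⟩ := eventually_atTop.1 hF
  have hDN : ∀ l ≥ N, schur b l (D F) = 0 := fun l hl => by
    rw [← derivation_schur_apply hb, hN l hl, map_zero]
  have hshift : ∑ k ∈ Finset.range (n + N), schur b (k + M) F * D (schur a k) =
      ∑ k ∈ Finset.range N, schur a k * schur b (k + (M + n)) F := by
    rw [Finset.sum_range_add, Finset.sum_eq_zero, zero_add]
    · refine Finset.sum_congr rfl fun k _ => ?_
      rw [add_comm n k, derivation_schur_add hn ha, mul_comm, add_assoc, add_comm n M]
    · intro k hk
      have hk := Finset.mem_range.1 hk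
      rw [derivation_schur_eq_zero D fun j hj => ?_, mul_zero]
      rw [ha, if_neg (by have := hj.2; lia)]
  rw [vertexCoeff_eq_sum_range M (N := n + N) fun l hl => hN l (by lia),
    vertexCoeff_eq_sum_range M (N := n + N) fun l hl => hDN l (by lia),
    vertexCoeff_eq_sum_range (M + n) hN, ← hshift, map_sum, ← Finset.sum_add_distrib]
  simp only [Derivation.leibniz, derivation_schur_apply hb, smul_eq_mul, add_comm]

variable {B : Type*} [CommRing B] [Algebra ℂ B] {φ : A →ₐ[ℂ] B}

theorem map_vertexCoeff (ha : ∀ j, φ (a j) = 0) (M : ℕ) {F : A}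
    (hF : ∀ᶠ l in atTop, schur b l F = 0) : φ (vertexCoeff a b M F) = φ (schur b M F) := by
  obtain ⟨N, hN⟩ := eventually_atTop.1 hF
  rw [vertexCoeff_eq_sum_range M (N := N + 1) fun l hl => hN l (by lia), map_sum,
    Finset.sum_range_succ', Finset.sum_eq_zero, zero_add, schur_zero, one_mul, zero_add]
  intro k _
  rw [map_mul, map_schur_eq_zero φ ha k.succ_ne_zero, zero_mul]

theorem map_schur_apply_eq_zero_of_vertexCoeff_eq_self {D : Derivation ℂ A A} {n : ℕ} (hn : n ≠ 0)
    (haD : ∀ j, D (a j) = if j = n then 1 else 0) (hb : ∀ j, Commute (D : Module.End ℂ A) (b j))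
    (haφ : ∀ j, φ (a j) = 0) {F : A} (hF : ∀ᶠ l in atTop, schur b l F = 0)
    (hself : vertexCoeff a b 0 F = F) : φ (schur b n F) = 0 := by
  have hDF : ∀ᶠ l in atTop, schur b l (D F) = 0 := hF.mono fun l hl => by
    rw [← derivation_schur_apply hb, hl, map_zero]
  have h := congrArg φ (derivation_vertexCoeff hn haD hb 0 hF)
  rwa [hself, map_add, map_vertexCoeff haφ _ hF, map_vertexCoeff haφ _ hDF, schur_zero,
    Module.End.one_apply, zero_add, right_eq_add] at h

end VertexCoeff

section Proportional

variable {R A : Type*} [CommRing R] [CommRing A] [Algebra R A]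

/-- The linear operators `T` on `A` that commute with multiplication by the fraction `f / g`: in
terms not involving fractions, `u = (f / g) v` implies `T u = (f / g) T v`. -/
def commutingWithFraction (f g : A) : Subalgebra R (Module.End R A) where
  carrier := {T | ∀ u v, g * u = f * v → g * T u = f * T v}
  mul_mem' hS hT u v h := hS _ _ (hT u v h)
  add_mem' hS hT u v h := by
    rw [LinearMap.add_apply, LinearMap.add_apply, mul_add, mul_add, hS u v h, hT u v h]
  algebraMap_mem' r u v h := by
    rw [Module.algebraMap_end_apply, Module.algebraMap_end_apply, mul_smul_comm, mul_smul_comm, h]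

theorem derivation_mem_commutingWithFraction (D : Derivation R A A) {f g : A}
    (hg : IsLeftRegular g) (hD : D f * g = f * D g) :
    (D : Module.End R A) ∈ commutingWithFraction f g := by
  intro u v h
  have hDh : g * D u + u * D g = f * D v + v * D f := by
    simpa only [Derivation.leibniz, smul_eq_mul] using congrArg D h
  apply hg
  dsimp only [Derivation.coeFn_coe]
  linear_combination g * hDh - D g * h + v * hD

theorem iterate_derivation_mul_eq (D : Derivation R A A) {g : A} (hg : IsLeftRegular g)
    (h : D (D g) * g = D g * D g) (k : ℕ) : D^[k + 1] g * g = D g * D^[k] g := by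
  induction k with
  | zero => rfl
  | succ k ih =>
    have hD : D^[k + 1] g * D g + g * D^[k + 2] g = D g * D^[k + 1] g + D^[k] g * D (D g) := by
      simpa only [Derivation.leibniz, smul_eq_mul, ← Function.iterate_succ_apply' D]
        using congrArg D ih
    apply hg
    dsimp only
    linear_combination g * hD + D^[k] g * h - D g * ih

theorem derivation_eq_zero_of_iterate_eq_zero [NoZeroDivisors A] (D : Derivation R A A) {g : A}
    (h : D (D g) * g = D g * D g) {k : ℕ} (hk : D^[k] g = 0) : D g = 0 := by
  induction k with
  | zero => rw [show g = 0 from hk, map_zero]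
  | succ k ih =>
    rcases eq_or_ne g 0 with rfl | hg
    · exact map_zero D
    have hmul := iterate_derivation_mul_eq D (IsLeftCancelMulZero.mul_left_cancel_of_ne_zero hg) h k
    rw [hk, zero_mul] at hmul
    exact (mul_eq_zero.1 hmul.symm).elim id ih

end Proportional

section Polynomials

variable {σ R : Type*}

theorem commute_pderiv [CommRing R] (i j : σ) :
    Commute (S := Module.End R (MvPolynomial σ R)) (pderiv i).toLinearMap
      (pderiv (R := R) j).toLinearMap := by
  have h : ⁅pderiv (R := R) i, pderiv (R := R) j⁆ = 0 := by
    classical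
    refine derivation_ext fun k => ?_
    simp [Derivation.commutator_apply, pderiv_X, Pi.single_apply, apply_ite]
  refine LinearMap.ext fun F => sub_eq_zero.1 ?_
  simpa [Derivation.commutator_apply] using Derivation.congr_fun h F

variable [CommSemiring R]

theorem pderiv_rename_of_notMem_range {ρ : Type*} {f : σ → ρ} {i : ρ} (hi : i ∉ Set.range f)
    (p : MvPolynomial σ R) : pderiv i (rename f p) = 0 := by
  classical
  refine pderiv_eq_zero_of_notMem_vars fun h => hi ?_
  obtain ⟨j, -, rfl⟩ := Finset.mem_image.1 (vars_rename f p h)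
  exact ⟨j, rfl⟩

variable (R) in
/-- The polynomials all of whose monomials have `w`-weight less than `d`. -/
noncomputable def weightLT (w : σ → ℕ) (d : ℕ) : Submodule R (MvPolynomial σ R) :=
  restrictSupport R {m | Finsupp.weight w m < d}

theorem mem_weightLT_zero_iff {w : σ → ℕ} {F : MvPolynomial σ R} : F ∈ weightLT R w 0 ↔ F = 0 := by
  simp [weightLT, mem_restrictSupport_iff]

theorem mem_weightLT_of_weightedTotalDegree_lt {w : σ → ℕ} {F : MvPolynomial σ R} {d : ℕ}
    (hd : weightedTotalDegree w F < d) : F ∈ weightLT R w d :=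
  fun _ hm => (le_weightedTotalDegree w hm).trans_lt hd

theorem pderiv_mem_weightLT {w : σ → ℕ} {d : ℕ} {F : MvPolynomial σ R} (hF : F ∈ weightLT R w d)
    (i : σ) : pderiv i F ∈ weightLT R w (d - w i) := by
  intro m hm
  have hm : m ∈ (pderiv i F).support := hm
  have hcoeff : coeff (m + Finsupp.single i 1) F ≠ 0 := fun h0 =>
    mem_support_iff.1 hm (by rw [coeff_pderiv, h0, zero_mul])
  have hlt : Finsupp.weight w (m + Finsupp.single i 1) < d := hF (mem_support_iff.2 hcoeff)
  rw [map_add, Finsupp.weight_single, one_smul] at hlt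
  exact Nat.lt_sub_of_add_lt hlt

theorem exists_iterate_pderiv_eq_zero (i : σ) (F : MvPolynomial σ R) :
    ∃ k, (pderiv i)^[k] F = 0 := by
  have hmem : ∀ d, F ∈ weightLT R 1 d → ∀ k, (pderiv i)^[k] F ∈ weightLT R 1 (d - k) := by
    intro d hd k
    induction k with
    | zero => exact hd
    | succ k ih =>
      rw [Function.iterate_succ_apply']
      exact pderiv_mem_weightLT ih i
  have h := hmem _ (mem_weightLT_of_weightedTotalDegree_lt (Nat.lt_succ_self _))
  exact ⟨_, mem_weightLT_zero_iff.1 (Nat.sub_self (weightedTotalDegree 1 F + 1) ▸ h _)⟩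

/-- The polynomial `f(t) g(t')` in the doubled set of variables. -/
noncomputable def externalProduct (f g : MvPolynomial σ R) : MvPolynomial (σ ⊕ σ) R :=
  rename Sum.inl f * rename Sum.inr g

theorem pderiv_inl_externalProduct (i : σ) (f g : MvPolynomial σ R) :
    pderiv (Sum.inl i) (externalProduct f g) = externalProduct (pderiv i f) g := by
  rw [externalProduct, pderiv_mul, pderiv_rename Sum.inl_injective,
    pderiv_rename_of_notMem_range (by simp), mul_zero, add_zero, externalProduct]

theorem pderiv_inr_externalProduct (i : σ) (f g : MvPolynomial σ R) :
    pderiv (Sum.inr i) (externalProduct f g) = externalProduct f (pderiv i g) := by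
  rw [externalProduct, pderiv_mul, pderiv_rename Sum.inr_injective,
    pderiv_rename_of_notMem_range (by simp), zero_mul, zero_add, externalProduct]

/-- Restriction to the diagonal `t' = t`. -/
noncomputable def diagonal : MvPolynomial (σ ⊕ σ) R →ₐ[R] MvPolynomial σ R :=
  rename (Sum.elim id id)

theorem diagonal_rename_inl (f : MvPolynomial σ R) : diagonal (rename Sum.inl f) = f := by
  rw [diagonal, rename_rename, Sum.elim_comp_inl, rename_id_apply]

theorem diagonal_rename_inr (f : MvPolynomial σ R) : diagonal (rename Sum.inr f) = f := by
  rw [diagonal, rename_rename, Sum.elim_comp_inr, rename_id_apply]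

theorem diagonal_externalProduct (f g : MvPolynomial σ R) :
    diagonal (externalProduct f g) = f * g := by
  rw [externalProduct, map_mul, diagonal_rename_inl, diagonal_rename_inr]

end Polynomials

section Hierarchy

theorem aSeq_odd (i : ℕ) : aSeq (2 * i + 1) = X (Sum.inl i) - X (Sum.inr i) := by
  simp [aSeq]

theorem aSeq_of_not_odd {j : ℕ} (hj : ¬ Odd j) : aSeq j = 0 :=
  if_neg hj

theorem bSeq_odd (i : ℕ) :
    bSeq (2 * i + 1) = ((2 : ℂ) / (2 * i + 1 : ℕ)) •
      ((pderiv (Sum.inr i)).toLinearMap - (pderiv (Sum.inl i)).toLinearMap) := by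
  simp [bSeq]

theorem bSeq_of_not_odd {j : ℕ} (hj : ¬ Odd j) : bSeq j = 0 :=
  if_neg hj

theorem pderiv_inl_aSeq (i j : ℕ) :
    pderiv (Sum.inl i) (aSeq j) = if j = 2 * i + 1 then 1 else 0 := by
  classical
  rcases em (Odd j) with ⟨k, rfl⟩ | hj
  · simp [aSeq_odd, pderiv_X, Pi.single_apply, eq_comm]
  · rw [aSeq_of_not_odd hj, map_zero, if_neg (by rintro rfl; exact hj (odd_two_mul_add_one i))]

theorem diagonal_aSeq (j : ℕ) : diagonal (aSeq j) = 0 := by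
  rcases em (Odd j) with ⟨k, rfl⟩ | hj
  · simp [aSeq_odd, diagonal]
  · rw [aSeq_of_not_odd hj, map_zero]

theorem commute_pderiv_bSeq (v : ℕ ⊕ ℕ) (j : ℕ) :
    Commute ((pderiv v).toLinearMap : Module.End ℂ RTwo) (bSeq j) := by
  rcases em (Odd j) with ⟨k, rfl⟩ | hj
  · rw [bSeq_odd]
    exact ((commute_pderiv v _).sub_right (commute_pderiv v _)).smul_right _
  · rw [bSeq_of_not_odd hj]
    exact Commute.zero_right _

/-- The grading in which `t_{2i+1}` and `t'_{2i+1}` have weight `2i + 1`. -/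
def oddWeight : ℕ ⊕ ℕ → ℕ := Sum.elim (2 * · + 1) (2 * · + 1)

theorem bSeq_mem_weightLT (j d : ℕ) (F : RTwo) (hF : F ∈ weightLT ℂ oddWeight d) :
    bSeq j F ∈ weightLT ℂ oddWeight (d - j) := by
  rcases em (Odd j) with ⟨k, rfl⟩ | hj
  · rw [bSeq_odd]
    exact Submodule.smul_mem _ _ (Submodule.sub_mem _ (pderiv_mem_weightLT hF (Sum.inr k))
      (pderiv_mem_weightLT hF (Sum.inl k)))
  · rw [bSeq_of_not_odd hj]
    exact Submodule.zero_mem _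

theorem eventually_schur_bSeq_apply_eq_zero (F : RTwo) : ∀ᶠ l in atTop, schur bSeq l F = 0 := by
  filter_upwards [eventually_gt_atTop (weightedTotalDegree oddWeight F)] with l hl
  have h := schur_apply_mem bSeq_mem_weightLT l (mem_weightLT_of_weightedTotalDegree_lt hl)
  rwa [Nat.sub_self, mem_weightLT_zero_iff] at h

theorem pderiv_inl_vertexCoeff (i M : ℕ) (F : RTwo) :
    pderiv (Sum.inl i) (vertexCoeff aSeq bSeq M F) =
      vertexCoeff aSeq bSeq (M + (2 * i + 1)) F +
        vertexCoeff aSeq bSeq M (pderiv (Sum.inl i) F) :=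
  derivation_vertexCoeff (2 * i).succ_ne_zero (pderiv_inl_aSeq i) (commute_pderiv_bSeq _) M
    (eventually_schur_bSeq_apply_eq_zero F)

theorem diagonal_schur_bSeq_apply_eq_zero (i : ℕ) {F : RTwo}
    (hF : vertexCoeff aSeq bSeq 0 F = F) : diagonal (schur bSeq (2 * i + 1) F) = 0 :=
  map_schur_apply_eq_zero_of_vertexCoeff_eq_self (2 * i).succ_ne_zero (pderiv_inl_aSeq i)
    (commute_pderiv_bSeq _) diagonal_aSeq (eventually_schur_bSeq_apply_eq_zero F) hF

theorem diagonal_bSeq_externalProduct (i : ℕ) (f g : ROdd) :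
    diagonal (bSeq (2 * i + 1) (externalProduct f g)) =
      ((2 : ℂ) / (2 * i + 1 : ℕ)) • (f * pderiv i g - pderiv i f * g) := by
  simp only [bSeq_odd, LinearMap.smul_apply, LinearMap.sub_apply, Derivation.coeFn_coe,
    pderiv_inl_externalProduct, pderiv_inr_externalProduct, map_smul, map_sub,
    diagonal_externalProduct]

theorem bSeq_mem_commutingWithFraction {f g : ROdd} (hg : g ≠ 0) {j : ℕ}
    (hj : ∀ i, j = 2 * i + 1 → pderiv i f * g = f * pderiv i g) :
    bSeq j ∈ commutingWithFraction (R := ℂ) (rename Sum.inl f : RTwo) (rename Sum.inl g) := by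
  rcases em (Odd j) with ⟨i, rfl⟩ | hj'
  · have hreg : IsLeftRegular (rename Sum.inl g : RTwo) :=
      IsLeftCancelMulZero.mul_left_cancel_of_ne_zero <|
        (map_ne_zero_iff _ (rename_injective _ Sum.inl_injective)).2 hg
    rw [bSeq_odd]
    refine Subalgebra.smul_mem _ (Subalgebra.sub_mem _ ?_ ?_) _
    · refine derivation_mem_commutingWithFraction _ hreg ?_
      rw [pderiv_rename_of_notMem_range (by simp), pderiv_rename_of_notMem_range (by simp),
        zero_mul, mul_zero]
    · refine derivation_mem_commutingWithFraction _ hreg ?_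
      rw [pderiv_rename Sum.inl_injective, pderiv_rename Sum.inl_injective, ← map_mul, hj i rfl,
        map_mul]
  · rw [bSeq_of_not_odd hj']
    exact Subalgebra.zero_mem _

theorem pderiv_mul_eq_mul_pderiv {f g : ROdd} (hg : g ≠ 0)
    (hfg : vertexCoeff aSeq bSeq 0 (externalProduct f g) = externalProduct f g)
    (hgg : vertexCoeff aSeq bSeq 0 (externalProduct g g) = externalProduct g g) (i : ℕ) :
    pderiv i f * g = f * pderiv i g := by
  induction i using Nat.strong_induction_on with
  | _ i ih =>
    have hT : schur bSeq (2 * i + 1) - bSeq (2 * i + 1) ∈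
        commutingWithFraction (R := ℂ) (rename Sum.inl f : RTwo) (rename Sum.inl g) :=
      schur_sub_mem _ (2 * i).succ_ne_zero fun j hj =>
        bSeq_mem_commutingWithFraction hg fun k hk => ih k (by have := hj.2; lia)
    have hfrac := congrArg diagonal (hT (externalProduct f g) (externalProduct g g)
      (by rw [externalProduct, externalProduct]; ring))
    have hdiag {h : ROdd} (hh : vertexCoeff aSeq bSeq 0 (externalProduct h g) =
        externalProduct h g) :
        diagonal ((schur bSeq (2 * i + 1) - bSeq (2 * i + 1)) (externalProduct h g)) =
          ((2 : ℂ) / (2 * i + 1 : ℕ)) • (pderiv i h * g - h * pderiv i g) := by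
      rw [LinearMap.sub_apply, map_sub, diagonal_schur_bSeq_apply_eq_zero i hh,
        diagonal_bSeq_externalProduct, zero_sub, ← smul_neg, neg_sub]
    rw [map_mul, map_mul, diagonal_rename_inl, diagonal_rename_inl, hdiag hfg, hdiag hgg,
      mul_comm g (pderiv i g), sub_self, smul_zero, mul_zero] at hfrac
    have hcoeff : (2 : ℂ) / (2 * i + 1 : ℕ) ≠ 0 :=
      div_ne_zero two_ne_zero (Nat.cast_ne_zero.2 (2 * i).succ_ne_zero)
    have hwronskian := (smul_eq_zero_iff_right hcoeff).1 ((mul_eq_zero_iff_left hg).1 hfrac)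
    exact sub_eq_zero.1 hwronskian

theorem externalProduct_self (τ : ROdd) : externalProduct τ τ = doubling τ := rfl

theorem omegaNeg_eq_vertexCoeff (M : ℕ) (τ : ROdd) :
    OmegaNeg M τ = vertexCoeff aSeq bSeq M (doubling τ) := rfl

theorem omegaNeg_mul_eq_zero_of_pderiv_eq_zero {i : ℕ} {τ : ROdd}
    (hbkp : OmegaNeg 0 τ = doubling τ) (hτ : pderiv i τ = 0) {p : ℕ} (hp : 1 ≤ p) :
    OmegaNeg (p * (2 * i + 1)) τ = 0 := by
  have hd : pderiv (Sum.inl i) (doubling τ) = 0 := by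
    rw [← externalProduct_self, pderiv_inl_externalProduct, hτ, externalProduct, map_zero, zero_mul]
  have hstep (M : ℕ) : OmegaNeg (M + (2 * i + 1)) τ = pderiv (Sum.inl i) (OmegaNeg M τ) := by
    rw [omegaNeg_eq_vertexCoeff, omegaNeg_eq_vertexCoeff, pderiv_inl_vertexCoeff, hd,
      vertexCoeff_zero, add_zero]
  induction p, hp using Nat.le_induction with
  | base => rw [one_mul, ← zero_add (2 * i + 1), hstep, hbkp, hd]
  | succ p _ ih => rw [add_one_mul, hstep, ih, map_zero]

theorem pderiv_eq_zero_of_omegaNeg_eq_zero {i : ℕ} {τ : ROdd}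
    (hbkp : OmegaNeg 0 τ = doubling τ) (hτ : OmegaNeg (2 * i + 1) τ = 0) : pderiv i τ = 0 := by
  rcases eq_or_ne τ 0 with rfl | hne
  · exact map_zero _
  rw [omegaNeg_eq_vertexCoeff, ← externalProduct_self] at hbkp hτ
  have hbkp' : vertexCoeff aSeq bSeq 0 (externalProduct (pderiv i τ) τ) =
      externalProduct (pderiv i τ) τ := by
    have h := pderiv_inl_vertexCoeff i 0 (externalProduct τ τ)
    rwa [hbkp, zero_add, hτ, zero_add, pderiv_inl_externalProduct, eq_comm] at h
  obtain ⟨k, hk⟩ := exists_iterate_pderiv_eq_zero i τ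
  exact derivation_eq_zero_of_iterate_eq_zero _ (pderiv_mul_eq_mul_pderiv hne hbkp' hbkp i) hk

end Hierarchy

end BKP

theorem bkp_reduction_equiv_general (i : ℕ) (τ : ROdd) (hbkp : OmegaNeg 0 τ = doubling τ) :
    List.TFAE [MvPolynomial.pderiv i τ = 0, OmegaNeg (2 * i + 1) τ = 0,
      ∀ p : ℕ, 1 ≤ p → OmegaNeg (p * (2 * i + 1)) τ = 0] := by
  tfae_have 1 → 3 := fun h _ => BKP.omegaNeg_mul_eq_zero_of_pderiv_eq_zero hbkp h
  tfae_have 3 → 2 := fun h => by simpa using h 1 le_rfl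
  tfae_have 2 → 1 := BKP.pderiv_eq_zero_of_omegaNeg_eq_zero hbkp
  tfae_finish

/-- for odd `n ≥ 3` and nonzero `τ ∈ ℂ[t₁,t₃,…]`, the pair of conditions
(BKP bilinear identity `Ω₀(τ) = τ(t)τ(t')` and `∂τ/∂t_n = 0`) is equivalent to the pair
(BKP bilinear identity and `Ω_{-pn}(τ) = 0` for all `p ≥ 1`).
Here `t_n` is variable `(n-1)/2` of `ROdd`. -/
theorem bkp_reduction_equiv (n : ℕ) (hodd : Odd n) (hn : 3 ≤ n) (τ : ROdd) (hτ : τ ≠ 0) :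
    (OmegaNeg 0 τ = doubling τ ∧ MvPolynomial.pderiv ((n - 1) / 2) τ = 0) ↔
      (OmegaNeg 0 τ = doubling τ ∧ ∀ p : ℕ, 1 ≤ p → OmegaNeg (p * n) τ = 0) := by
  obtain ⟨i, rfl⟩ := hodd
  rw [show (2 * i + 1 - 1) / 2 = i by lia]
  exact and_congr_right fun hbkp => (bkp_reduction_equiv_general i τ hbkp).out 0 2
end

section
/- Let n ≥ 3 be odd. If a nonzero polynomial τ ∈ ℂ[t_1, t_3, t_5, …] is a tau-function of the n-th Sawada-Kotera hierarchy, then ∂τ/∂t_{(2j−1)n} = 0 for every integer j ≥ 1. -/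
/-!
Write `σ ⊗ τ` for `σ(t) τ(t')`, put `∂ᵢ = ∂/∂t_{2i+1}`, and let `Ω_{-M}` act on an arbitrary
`F ∈ ℂ[t, t']` in place of `τ ⊗ τ`. From `∂ᵢ s_k(ã) = s_{k-2i-1}(ã)` one gets
`∂ᵢ (Ω_0 F) = Ω_0 (∂ᵢ F) + Ω_{-(2i+1)} F`. This is used twice, with `F = τ ⊗ τ` and with the
function `∂ᵢτ ⊗ τ = ∂ᵢ F` it produces: if `Ω_0 F = F` then

* `Ω_{-(2i+1)} F = 0` implies that `∂ᵢ F` again satisfies the bilinear identity;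
* restricting to `t = t'`, where all `ã_j` vanish, gives `(s_{2i+1}(b̃) F)|_{t = t'} = 0` for
  all `i`.

For `F = σ ⊗ τ` the second family of equations says that `σ/τ` is constant. Indeed exchanging `t`
and `t'` negates every `b̃_j`, so `s_{2i+1}(b̃)` also kills `E = σ ⊗ τ - τ ⊗ σ` on the diagonal. If
`∂ₗ` annihilates `σ/τ` for `l < i`, the functions divisible by `E` up to powers of `τ ⊗ τ` are
stable under `b̃_1, …, b̃_{2i}` and vanish on the diagonal, so of `s_{2i+1}(b̃) E` only the term
`b̃_{2i+1} E` survives there, and it is a nonzero multiple of `τ ∂ᵢσ - σ ∂ᵢτ`.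

With `σ = ∂ᵢτ` we obtain `τ ∂ᵢ²τ = (∂ᵢτ)²`, which for a polynomial `τ` forces `∂ᵢτ = 0`.
-/

section Schur

open Finset

section Ring

variable {A : Type*} [Ring A] [Algebra ℂ A]

theorem schur_zero (x : ℕ → A) : schur x 0 = 1 := by
  rw [schur]

theorem schur_succ (x : ℕ → A) (m : ℕ) :
    schur x (m + 1) = (m + 1 : ℂ)⁻¹ •
      ∑ p ∈ antidiagonal m, (p.1 + 1 : ℂ) • (x (p.1 + 1) * schur x p.2) := by
  rw [schur, Nat.sum_antidiagonal_eq_sum_range_succ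
    fun i j => (i + 1 : ℂ) • (x (i + 1) * schur x j)]

theorem succ_smul_schur_succ (x : ℕ → A) (m : ℕ) :
    (m + 1 : ℂ) • schur x (m + 1) =
      ∑ p ∈ antidiagonal m, (p.1 + 1 : ℂ) • (x (p.1 + 1) * schur x p.2) := by
  rw [schur_succ, smul_inv_smul₀ (Nat.cast_add_one_ne_zero m)]

end Ring

section CommRing

variable {A : Type*} [CommRing A] [Algebra ℂ A] {x : ℕ → A}

theorem schur_succ_mem_ideal {I : Ideal A} (hx : ∀ j, x j ∈ I) (m : ℕ) :
    schur x (m + 1) ∈ I := by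
  rw [schur_succ]
  exact Submodule.smul_of_tower_mem _ _ <| sum_mem fun p _ =>
    Submodule.smul_of_tower_mem _ _ <| I.mul_mem_right _ (hx _)

theorem derivation_schur_zero (D : Derivation ℂ A A) : D (schur x 0) = 0 := by
  rw [schur_zero, D.map_one_eq_zero]

theorem derivation_schur_succ (D : Derivation ℂ A A) (m : ℕ) :
    D (schur x (m + 1)) = ∑ p ∈ antidiagonal m, D (x (p.1 + 1)) * schur x p.2 := by
  induction m using Nat.strong_induction_on with
  | _ m ih =>
    have exchange : ∑ p ∈ antidiagonal m, (p.1 + 1 : ℂ) • (x (p.1 + 1) * D (schur x p.2)) =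
        ∑ p ∈ antidiagonal m, (p.2 : ℂ) • (D (x (p.1 + 1)) * schur x p.2) := by
      cases m with
      | zero => simp [derivation_schur_zero]
      | succ m =>
        rw [Nat.sum_antidiagonal_succ', Nat.sum_antidiagonal_succ']
        -- both sides are the coefficient of `z ^ m` in a product of three power series
        have h := congrArg (PowerSeries.coeff m) (mul_left_comm
          (PowerSeries.mk fun i => (i + 1 : ℂ) • x (i + 1))
          (PowerSeries.mk fun i => D (x (i + 1))) (PowerSeries.mk (schur x)))
        simp only [PowerSeries.coeff_mul, PowerSeries.coeff_mk, smul_mul_assoc,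
          ← succ_smul_schur_succ] at h
        simp only [derivation_schur_zero, mul_zero, smul_zero, zero_add, Nat.cast_zero, zero_smul,
          Nat.cast_add, Nat.cast_one, ← mul_smul_comm]
        rw [← h]
        refine sum_congr rfl fun p hp => ?_
        rw [ih p.2 (Nat.antidiagonal.snd_lt hp), mul_smul_comm]
    have key : (m + 1 : ℂ) • D (schur x (m + 1)) =
        (m + 1 : ℂ) • ∑ p ∈ antidiagonal m, D (x (p.1 + 1)) * schur x p.2 := by
      calc (m + 1 : ℂ) • D (schur x (m + 1))
          = ∑ p ∈ antidiagonal m, ((p.1 + 1 : ℂ) • (x (p.1 + 1) * D (schur x p.2)) +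
              (p.1 + 1 : ℂ) • (D (x (p.1 + 1)) * schur x p.2)) := by
            simp only [← D.map_smul, succ_smul_schur_succ, map_sum]
            simp only [D.map_smul, D.leibniz, smul_eq_mul, smul_add, mul_comm (schur x _)]
        _ = ∑ p ∈ antidiagonal m, (m + 1 : ℂ) • (D (x (p.1 + 1)) * schur x p.2) := by
            rw [sum_add_distrib, exchange, ← sum_add_distrib]
            refine sum_congr rfl fun p hp => ?_
            rw [← add_smul, ← mem_antidiagonal.mp hp]
            push_cast
            ring_nf
        _ = _ := (smul_sum ..).symm
    exact smul_right_injective A (Nat.cast_add_one_ne_zero m) key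

theorem derivation_schur_eq_zero_of_le {D : Derivation ℂ A A} {r : ℕ}
    (hD : ∀ j, D (x j) = if j = r + 1 then 1 else 0) {m : ℕ} (hm : m ≤ r) :
    D (schur x m) = 0 := by
  cases m with
  | zero => exact derivation_schur_zero D
  | succ m =>
    rw [derivation_schur_succ]
    refine sum_eq_zero fun p hp => ?_
    have := Nat.antidiagonal.fst_lt hp
    rw [hD, if_neg (by omega), zero_mul]

theorem derivation_schur_add {D : Derivation ℂ A A} {r : ℕ}
    (hD : ∀ j, D (x j) = if j = r + 1 then 1 else 0) (m : ℕ) :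
    D (schur x (r + 1 + m)) = schur x m := by
  rw [show r + 1 + m = r + m + 1 by omega, derivation_schur_succ, sum_eq_single (r, m)]
  · simp [hD]
  · intro p hp hne
    have hp' := mem_antidiagonal.mp hp
    have : p.1 ≠ r := fun h => hne (Prod.ext h (by omega))
    rw [hD, if_neg (by omega), zero_mul]
  · simp

end CommRing

section Module

variable {V V' : Type*} [AddCommGroup V] [Module ℂ V] [AddCommGroup V'] [Module ℂ V']
variable {x : ℕ → Module.End ℂ V}

theorem schur_succ_apply (x : ℕ → Module.End ℂ V) (m : ℕ) (v : V) :
    schur x (m + 1) v = (m + 1 : ℂ)⁻¹ •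
      ∑ p ∈ antidiagonal m, (p.1 + 1 : ℂ) • x (p.1 + 1) (schur x p.2 v) := by
  simp [schur_succ, LinearMap.sum_apply]

theorem map_schur_apply {y : ℕ → Module.End ℂ V'} (φ : V →ₗ[ℂ] V') (c : ℂ)
    (h : ∀ j v, φ (x j v) = c ^ j • y j (φ v)) (m : ℕ) (v : V) :
    φ (schur x m v) = c ^ m • schur y m (φ v) := by
  induction m using Nat.strong_induction_on with
  | _ m ih =>
    cases m with
    | zero => simp [schur_zero]
    | succ m =>
      rw [schur_succ_apply, schur_succ_apply, map_smul, map_sum,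
        smul_comm (c ^ (m + 1)) ((m + 1 : ℂ)⁻¹),
        smul_sum (r := c ^ (m + 1))]
      congr 1
      refine sum_congr rfl fun p hp => ?_
      have hc : c ^ (m + 1) = c ^ (p.1 + 1) * c ^ p.2 := by
        rw [← pow_add, ← mem_antidiagonal.mp hp, add_right_comm]
      rw [map_smul, h, ih p.2 (Nat.antidiagonal.snd_lt hp), map_smul, hc, mul_smul,
        smul_comm (p.1 + 1 : ℂ), smul_comm (p.1 + 1 : ℂ)]

theorem schur_apply_mem {W : ℕ → Submodule ℂ V} {m : ℕ}
    (hx : ∀ j ≤ m, ∀ s, ∀ v ∈ W s, x j v ∈ W (s + j)) {s : ℕ} {v : V} (hv : v ∈ W s) :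
    schur x m v ∈ W (s + m) := by
  induction m using Nat.strong_induction_on with
  | _ m ih =>
    cases m with
    | zero => simpa [schur_zero] using hv
    | succ m =>
      rw [schur_succ_apply]
      refine Submodule.smul_mem _ _ <| sum_mem fun p hp => Submodule.smul_mem _ _ ?_
      have hp' := mem_antidiagonal.mp hp
      have h := hx (p.1 + 1) (by omega) _ _ (ih p.2 (by omega) fun j hj => hx j (by omega))
      rwa [show s + p.2 + (p.1 + 1) = s + (m + 1) by omega] at h

theorem schur_succ_apply_sub_mem {W : Submodule ℂ V} {m : ℕ}
    (hx : ∀ j ≤ m, ∀ v ∈ W, x j v ∈ W) {v : V} (hv : v ∈ W) :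
    schur x (m + 1) v - x (m + 1) v ∈ W := by
  cases m with
  | zero => simp [schur_succ_apply, schur_zero]
  | succ m =>
    have hm : ((m + 1 : ℕ) + 1 : ℂ) ≠ 0 := Nat.cast_add_one_ne_zero _
    rw [schur_succ_apply, Nat.sum_antidiagonal_succ', smul_add, schur_zero, inv_smul_smul₀ hm,
      Module.End.one_apply, add_sub_cancel_left]
    refine W.smul_mem _ <| sum_mem fun p hp => W.smul_mem _ ?_
    have hp' := mem_antidiagonal.mp hp
    exact hx _ (by omega) _ <| schur_apply_mem (W := fun _ => W) (s := 0)
      (fun j hj _ => hx j (by omega)) hv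

end Module

end Schur

section Derivation

theorem derivation_eq_zero_of_mul_eq_sq {R A : Type*} [CommSemiring R] [CommRing A]
    [NoZeroDivisors A] [Algebra R A] (D : Derivation R A A) {a : A} (hnil : ∃ n, D^[n] a = 0)
    (ha : D (D a) * a = D a * D a) : D a = 0 := by
  by_contra hDa
  have ha0 : a ≠ 0 := by
    rintro rfl
    exact hDa (map_zero D)
  have ratio (n : ℕ) : a * D^[n + 1] a = D a * D^[n] a := by
    induction n with
    | zero => exact mul_comm _ _
    | succ n ih =>
      have hD := congrArg D ih
      simp only [Function.iterate_succ_apply', D.leibniz, smul_eq_mul] at ih hD ⊢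
      apply mul_left_cancel₀ ha0
      linear_combination a * hD + D^[n] a * ha - D a * ih
  obtain ⟨n, hn⟩ := hnil
  have hne : D^[n] a ≠ 0 := by
    clear hn
    induction n with
    | zero => exact ha0
    | succ n ih => exact right_ne_zero_of_mul ((ratio n).trans_ne (mul_ne_zero hDa ih))
  exact hne hn

variable {A : Type*} [CommRing A]

/-- The saturation `(e) : t^∞` of the principal ideal generated by `e`: the elements that become
divisible by `e` after multiplication by a power of `t`. -/
def dvdSaturation (e t : A) : Ideal A where
  carrier := {a | ∃ n : ℕ, e ∣ t ^ n * a}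
  zero_mem' := ⟨0, by simp⟩
  add_mem' := by
    rintro a b ⟨n, ha⟩ ⟨k, hb⟩
    refine ⟨n + k, ?_⟩
    rw [show t ^ (n + k) * (a + b) = t ^ k * (t ^ n * a) + t ^ n * (t ^ k * b) by ring]
    exact dvd_add (ha.mul_left _) (hb.mul_left _)
  smul_mem' := by
    rintro c a ⟨n, ha⟩
    refine ⟨n, ?_⟩
    rw [smul_eq_mul, mul_left_comm]
    exact ha.mul_left c

theorem self_mem_dvdSaturation (e t : A) : e ∈ dvdSaturation e t :=
  ⟨0, by simp⟩

theorem derivation_mem_dvdSaturation {R : Type*} [CommSemiring R] [Algebra R A]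
    (D : Derivation R A A) {e t a : A} (he : e ∣ t * D e) (ha : a ∈ dvdSaturation e t) :
    D a ∈ dvdSaturation e t := by
  obtain ⟨n, g, hg⟩ := ha
  obtain ⟨f, hf⟩ := he
  have hD := congrArg D hg
  simp only [D.leibniz, D.leibniz_pow, smul_eq_mul, nsmul_eq_mul] at hD
  obtain ⟨n, rfl⟩ | rfl : (∃ k, n = k + 1) ∨ n = 0 := by
    cases n <;> simp
  · refine ⟨n + 2, t * D g + g * f - (n + 1) * D t * g, ?_⟩
    push_cast at hD
    linear_combination t * hD + g * hf - (n + 1) * D t * hg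
  · refine ⟨1, t * D g + g * f, ?_⟩
    simp only [pow_zero, Nat.cast_zero, zero_mul, mul_zero, add_zero, one_mul] at hD
    linear_combination t * hD + g * hf

theorem map_eq_zero_of_mem_dvdSaturation {B : Type*} [CommRing B] [NoZeroDivisors B] (φ : A →+* B)
    {e t a : A} (he : φ e = 0) (ht : φ t ≠ 0) (ha : a ∈ dvdSaturation e t) : φ a = 0 := by
  obtain ⟨n, hn⟩ := ha
  have h := map_dvd φ hn
  rw [he, zero_dvd_iff, map_mul, map_pow] at h
  exact (mul_eq_zero.mp h).resolve_left (pow_ne_zero n ht)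

end Derivation

section MvPolynomial

open MvPolynomial

section PartialDerivatives

variable {σ R : Type*} [CommSemiring R]

theorem pderiv_pderiv_comm (i j : σ) (p : MvPolynomial σ R) :
    pderiv i (pderiv j p) = pderiv j (pderiv i p) := by
  classical
  obtain rfl | hij := eq_or_ne i j
  · rfl
  ext m
  simp [coeff_pderiv, hij, hij.symm, add_right_comm, mul_right_comm]

/-- The polynomials whose monomials have `w`-weight less than `d - s`, as a decreasing filtration
indexed by `s`. The bound is written additively to avoid truncated subtraction. -/
noncomputable def weightFiltration (R : Type*) [CommSemiring R] (w : σ → ℕ) (d s : ℕ) :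
    Submodule R (MvPolynomial σ R) :=
  restrictSupport R {m | Finsupp.weight w m + s < d}

theorem mem_weightFiltration {w : σ → ℕ} {d s : ℕ} {p : MvPolynomial σ R} :
    p ∈ weightFiltration R w d s ↔ ∀ m, coeff m p ≠ 0 → Finsupp.weight w m + s < d := by
  simp [weightFiltration, mem_restrictSupport_iff, Set.subset_def]

theorem mem_weightFiltration_zero (w : σ → ℕ) (p : MvPolynomial σ R) :
    p ∈ weightFiltration R w (weightedTotalDegree w p + 1) 0 :=
  mem_weightFiltration.mpr fun _ hm =>
    Nat.lt_succ_of_le (le_weightedTotalDegree w (mem_support_iff.mpr hm))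

theorem eq_zero_of_mem_weightFiltration {w : σ → ℕ} {d s : ℕ} (hds : d ≤ s)
    {p : MvPolynomial σ R} (hp : p ∈ weightFiltration R w d s) : p = 0 := by
  ext m
  by_contra hm
  have := mem_weightFiltration.mp hp m hm
  omega

theorem pderiv_mem_weightFiltration {w : σ → ℕ} {d s : ℕ} (i : σ) {p : MvPolynomial σ R}
    (hp : p ∈ weightFiltration R w d s) : pderiv i p ∈ weightFiltration R w d (s + w i) := by
  refine mem_weightFiltration.mpr fun m hm => ?_
  rw [coeff_pderiv] at hm
  have h := mem_weightFiltration.mp hp _ (left_ne_zero_of_mul hm)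
  rw [map_add, Finsupp.weight_single, one_smul] at h
  omega

theorem exists_iterate_pderiv_eq_zero (i : σ) (p : MvPolynomial σ R) :
    ∃ n, (pderiv i)^[n] p = 0 := by
  have hmem (n : ℕ) : (pderiv i)^[n] p ∈ weightFiltration R 1 (weightedTotalDegree 1 p + 1) n := by
    induction n with
    | zero => exact mem_weightFiltration_zero 1 p
    | succ n ih =>
      rw [Function.iterate_succ_apply']
      exact pderiv_mem_weightFiltration i ih
  exact ⟨_, eq_zero_of_mem_weightFiltration le_rfl (hmem _)⟩

end PartialDerivatives

section ExternalProduct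

variable {σ ρ R : Type*} [CommSemiring R]

/-- The external product `u ⊗ v = u(t) v(t')`, so that `doubling τ` is `τ ⊗ τ`. -/
noncomputable def extProd (u : MvPolynomial σ R) (v : MvPolynomial ρ R) :
    MvPolynomial (σ ⊕ ρ) R :=
  rename Sum.inl u * rename Sum.inr v

/-- Restriction to the diagonal `t = t'`. -/
noncomputable def diag : MvPolynomial (σ ⊕ σ) R →ₐ[R] MvPolynomial σ R :=
  rename (Sum.elim id id)

/-- The exchange of the two families of variables `t` and `t'`. -/
noncomputable def swapVars : MvPolynomial (σ ⊕ ρ) R →ₐ[R] MvPolynomial (ρ ⊕ σ) R :=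
  rename Sum.swap

theorem diag_extProd (u v : MvPolynomial σ R) : diag (extProd u v) = u * v := by
  simp [diag, extProd, rename_rename, Sum.elim_comp_inl, Sum.elim_comp_inr]

theorem swapVars_extProd (u : MvPolynomial σ R) (v : MvPolynomial ρ R) :
    swapVars (extProd u v) = extProd v u := by
  simp [swapVars, extProd, rename_rename, Function.comp_def, mul_comm]

theorem diag_swapVars (p : MvPolynomial (σ ⊕ σ) R) : diag (swapVars p) = diag p := by
  simp [diag, swapVars, rename_rename]

theorem pderiv_inl_swapVars (i : ρ) (p : MvPolynomial (σ ⊕ ρ) R) :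
    pderiv (Sum.inl i) (swapVars p) = swapVars (pderiv (Sum.inr i) p) :=
  pderiv_rename (Equiv.sumComm σ ρ).injective (Sum.inr i) p

theorem pderiv_inr_swapVars (i : σ) (p : MvPolynomial (σ ⊕ ρ) R) :
    pderiv (Sum.inr i) (swapVars p) = swapVars (pderiv (Sum.inl i) p) :=
  pderiv_rename (Equiv.sumComm σ ρ).injective (Sum.inl i) p

theorem pderiv_rename_eq_zero {f : σ → ρ} {i : ρ} (hi : i ∉ Set.range f)
    (p : MvPolynomial σ R) : pderiv i (rename f p) = 0 :=
  pderiv_eq_zero_of_notMem_vars fun h =>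
    let ⟨j, _, hj⟩ := mem_vars_rename f p h
    hi ⟨j, hj⟩

theorem pderiv_inl_extProd (i : σ) (u : MvPolynomial σ R) (v : MvPolynomial ρ R) :
    pderiv (Sum.inl i) (extProd u v) = extProd (pderiv i u) v := by
  rw [extProd, pderiv_mul, pderiv_rename Sum.inl_injective, pderiv_rename_eq_zero (by simp),
    mul_zero, add_zero, extProd]

theorem pderiv_inr_extProd (i : ρ) (u : MvPolynomial σ R) (v : MvPolynomial ρ R) :
    pderiv (Sum.inr i) (extProd u v) = extProd u (pderiv i v) := by
  rw [extProd, pderiv_mul, pderiv_rename Sum.inr_injective, pderiv_rename_eq_zero (by simp),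
    zero_mul, zero_add, extProd]

end ExternalProduct

section ProportionalPairs

variable {ι R : Type*} [CommRing R] {σ τ : MvPolynomial ι R} {i : ι}

theorem extProd_sub_extProd_dvd_pderiv_inl (h : pderiv i σ * τ = σ * pderiv i τ) :
    extProd σ τ - extProd τ σ ∣
      extProd τ τ * pderiv (Sum.inl i) (extProd σ τ - extProd τ σ) := by
  have h' := congrArg (rename (Sum.inl : ι → ι ⊕ ι)) h
  refine ⟨extProd (pderiv i τ) τ, ?_⟩
  rw [map_sub, pderiv_inl_extProd, pderiv_inl_extProd]
  simp only [extProd, map_mul] at h' ⊢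
  linear_combination rename Sum.inr τ ^ 2 * h'

theorem extProd_sub_extProd_dvd_pderiv_inr (h : pderiv i σ * τ = σ * pderiv i τ) :
    extProd σ τ - extProd τ σ ∣
      extProd τ τ * pderiv (Sum.inr i) (extProd σ τ - extProd τ σ) := by
  have h' := congrArg (rename (Sum.inr : ι → ι ⊕ ι)) h
  refine ⟨extProd τ (pderiv i τ), ?_⟩
  rw [map_sub, pderiv_inr_extProd, pderiv_inr_extProd]
  simp only [extProd, map_mul] at h' ⊢
  linear_combination -rename Sum.inl τ ^ 2 * h'

end ProportionalPairs

end MvPolynomial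

section BKP

open MvPolynomial

theorem aSeq_odd (i : ℕ) : aSeq (2 * i + 1) = X (Sum.inl i) - X (Sum.inr i) := by
  simp [aSeq]

theorem aSeq_of_not_odd {j : ℕ} (hj : ¬Odd j) : aSeq j = 0 :=
  if_neg hj

theorem bSeq_odd_apply (i : ℕ) (F : RTwo) : bSeq (2 * i + 1) F =
    (2 / (2 * i + 1 : ℕ) : ℂ) • (pderiv (Sum.inr i) F - pderiv (Sum.inl i) F) := by
  simp [bSeq]

theorem bSeq_of_not_odd {j : ℕ} (hj : ¬Odd j) : bSeq j = 0 :=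
  if_neg hj

theorem diag_aSeq (j : ℕ) : diag (aSeq j) = 0 := by
  by_cases hj : Odd j
  · obtain ⟨i, rfl⟩ := hj
    simp [aSeq_odd, diag]
  · rw [aSeq_of_not_odd hj, map_zero]

theorem diag_schur_aSeq_succ (m : ℕ) : diag (schur aSeq (m + 1)) = 0 :=
  schur_succ_mem_ideal (I := RingHom.ker (diag : RTwo →ₐ[ℂ] ROdd)) diag_aSeq m

theorem pderiv_inl_aSeq (i j : ℕ) :
    pderiv (Sum.inl i) (aSeq j) = if j = 2 * i + 1 then 1 else 0 := by
  by_cases hj : Odd j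
  · obtain ⟨l, rfl⟩ := hj
    rw [aSeq_odd, map_sub, pderiv_X_of_ne Sum.inr_ne_inl, sub_zero]
    simp [pderiv_X, Pi.single_apply, Sum.inl.injEq]
  · rw [aSeq_of_not_odd hj, map_zero, if_neg]
    rintro rfl
    exact hj ⟨i, rfl⟩

theorem bSeq_apply_mem {W : Submodule ℂ RTwo} {j : ℕ} {F : RTwo}
    (hF : ∀ i, j = 2 * i + 1 → pderiv (Sum.inl i) F ∈ W ∧ pderiv (Sum.inr i) F ∈ W) :
    bSeq j F ∈ W := by
  by_cases hj : Odd j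
  · obtain ⟨i, rfl⟩ := hj
    rw [bSeq_odd_apply]
    exact W.smul_mem _ (W.sub_mem (hF i rfl).2 (hF i rfl).1)
  · simp [bSeq_of_not_odd hj]

theorem pderiv_bSeq (v : ℕ ⊕ ℕ) (j : ℕ) (F : RTwo) :
    pderiv v (bSeq j F) = bSeq j (pderiv v F) := by
  by_cases hj : Odd j
  · obtain ⟨i, rfl⟩ := hj
    simp only [bSeq_odd_apply, Derivation.map_smul, map_sub, pderiv_pderiv_comm v]
  · simp [bSeq_of_not_odd hj]

theorem pderiv_schur_bSeq (v : ℕ ⊕ ℕ) (m : ℕ) (F : RTwo) :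
    pderiv v (schur bSeq m F) = schur bSeq m (pderiv v F) := by
  simpa using map_schur_apply (pderiv v).toLinearMap 1 (by simpa using pderiv_bSeq v) m F

theorem swapVars_bSeq (j : ℕ) (F : RTwo) :
    swapVars (bSeq j F) = (-1 : ℂ) ^ j • bSeq j (swapVars F) := by
  by_cases hj : Odd j
  · obtain ⟨i, rfl⟩ := hj
    rw [bSeq_odd_apply, bSeq_odd_apply, pderiv_inl_swapVars, pderiv_inr_swapVars, map_smul,
      map_sub, Odd.neg_one_pow ⟨i, rfl⟩, neg_one_smul, ← smul_neg, neg_sub]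
  · simp [bSeq_of_not_odd hj]

theorem diag_schur_bSeq_swapVars (m : ℕ) (F : RTwo) :
    diag (schur bSeq m (swapVars F)) = (-1 : ℂ) ^ m • diag (schur bSeq m F) := by
  have h : swapVars (schur bSeq m F) = (-1 : ℂ) ^ m • schur bSeq m (swapVars F) :=
    map_schur_apply swapVars.toLinearMap (-1) swapVars_bSeq m F
  rw [← diag_swapVars (schur bSeq m F), h, map_smul, smul_smul, ← mul_pow]
  simp

theorem exists_schur_bSeq_apply_eq_zero (F : RTwo) : ∃ N, ∀ m ≥ N, schur bSeq m F = 0 := by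
  let w : ℕ ⊕ ℕ → ℕ := Sum.elim (2 * · + 1) (2 * · + 1)
  refine ⟨weightedTotalDegree w F + 1, fun m hm => ?_⟩
  have hb (j s : ℕ) (G : RTwo) (hG : G ∈ weightFiltration ℂ w (weightedTotalDegree w F + 1) s) :
      bSeq j G ∈ weightFiltration ℂ w (weightedTotalDegree w F + 1) (s + j) := by
    refine bSeq_apply_mem ?_
    rintro i rfl
    exact ⟨pderiv_mem_weightFiltration (Sum.inl i) hG, pderiv_mem_weightFiltration (Sum.inr i) hG⟩
  exact eq_zero_of_mem_weightFiltration (hm.trans (Nat.zero_add m).ge)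
    (schur_apply_mem (fun j _ => hb j) (mem_weightFiltration_zero w F))

theorem doubling_eq_extProd (τ : ROdd) : doubling τ = extProd τ τ :=
  rfl

/-- The operator `Ω_{-M}` on an arbitrary `F ∈ ℂ[t, t']`: `OmegaNeg M τ` is its value at
`τ(t) τ(t')`. The sum is finite by `exists_schur_bSeq_apply_eq_zero`. -/
noncomputable def omegaOp (M : ℕ) (F : RTwo) : RTwo :=
  ∑ᶠ k, schur aSeq k * schur bSeq (k + M) F

theorem omegaNeg_eq_omegaOp (M : ℕ) (τ : ROdd) : OmegaNeg M τ = omegaOp M (extProd τ τ) :=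
  rfl

theorem omegaOp_eq_sum_range {F : RTwo} {N : ℕ} (hN : ∀ m ≥ N, schur bSeq m F = 0) (M : ℕ) :
    omegaOp M F = ∑ k ∈ Finset.range N, schur aSeq k * schur bSeq (k + M) F := by
  refine finsum_eq_sum_of_support_subset _ fun k hk => ?_
  by_contra hkN
  have hNk : N ≤ k := by simpa using hkN
  exact hk (by simp only [hN (k + M) (by omega), mul_zero])

theorem pderiv_inl_omegaOp (i M : ℕ) (F : RTwo) :
    pderiv (Sum.inl i) (omegaOp M F) =
      omegaOp (2 * i + 1 + M) F + omegaOp M (pderiv (Sum.inl i) F) := by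
  obtain ⟨N, hN⟩ := exists_schur_bSeq_apply_eq_zero F
  have hN' : ∀ m ≥ 2 * i + 1 + N, schur bSeq m F = 0 := fun m hm => hN m (by omega)
  have hN'' : ∀ m ≥ 2 * i + 1 + N, schur bSeq m (pderiv (Sum.inl i) F) = 0 := fun m hm => by
    rw [← pderiv_schur_bSeq, hN' m hm, map_zero]
  have ha := pderiv_inl_aSeq i
  have hlow : ∑ k ∈ Finset.range (2 * i + 1),
      pderiv (Sum.inl i) (schur aSeq k) * schur bSeq (k + M) F = 0 :=
    Finset.sum_eq_zero fun k hk => by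
      rw [derivation_schur_eq_zero_of_le ha (Finset.mem_range_succ_iff.mp hk), zero_mul]
  rw [omegaOp_eq_sum_range hN', omegaOp_eq_sum_range hN, omegaOp_eq_sum_range hN'', map_sum]
  simp only [pderiv_mul, Finset.sum_add_distrib, pderiv_schur_bSeq]
  rw [Finset.sum_range_add (fun k => pderiv (Sum.inl i) (schur aSeq k) * _), hlow, zero_add]
  congr 1
  exact Finset.sum_congr rfl fun k _ => by
    rw [derivation_schur_add ha, show 2 * i + 1 + k + M = k + (2 * i + 1 + M) by omega]

theorem diag_omegaOp (M : ℕ) (F : RTwo) : diag (omegaOp M F) = diag (schur bSeq M F) := by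
  obtain ⟨N, hN⟩ := exists_schur_bSeq_apply_eq_zero F
  rw [omegaOp_eq_sum_range (N := N + 1) fun m hm => hN m (by omega), map_sum,
    Finset.sum_range_succ', Finset.sum_eq_zero, zero_add, schur_zero, one_mul, zero_add]
  intro k _
  rw [map_mul, diag_schur_aSeq_succ, zero_mul]

theorem omegaOp_zero_pderiv_inl {F : RTwo} {i : ℕ} (hF : omegaOp 0 F = F)
    (hFi : omegaOp (2 * i + 1) F = 0) :
    omegaOp 0 (pderiv (Sum.inl i) F) = pderiv (Sum.inl i) F := by
  have h := pderiv_inl_omegaOp i 0 F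
  rw [hF, add_zero, hFi, zero_add] at h
  exact h.symm

theorem diag_schur_bSeq_odd_eq_zero {F : RTwo} (hF : omegaOp 0 F = F) (i : ℕ) :
    diag (schur bSeq (2 * i + 1) F) = 0 := by
  have h := congrArg diag (pderiv_inl_omegaOp i 0 F)
  rw [hF, map_add, diag_omegaOp, diag_omegaOp, schur_zero] at h
  simpa using h

theorem diag_bSeq_odd_extProd_sub (i : ℕ) (σ τ : ROdd) :
    diag (bSeq (2 * i + 1) (extProd σ τ - extProd τ σ)) =
      (4 / (2 * i + 1 : ℕ) : ℂ) • (σ * pderiv i τ - pderiv i σ * τ) := by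
  simp only [bSeq_odd_apply, map_smul, map_sub, pderiv_inl_extProd, pderiv_inr_extProd,
    diag_extProd]
  rw [show (4 / (2 * i + 1 : ℕ) : ℂ) = 2 / (2 * i + 1 : ℕ) * 2 by ring, mul_smul, two_smul]
  rw [← smul_sub]
  congr 1
  ring

theorem pderiv_mul_eq_mul_pderiv {σ τ : ROdd} (hτ : τ ≠ 0)
    (h : ∀ i, diag (schur bSeq (2 * i + 1) (extProd σ τ)) = 0) (i : ℕ) :
    pderiv i σ * τ = σ * pderiv i τ := by
  induction i using Nat.strong_induction_on with
  | _ i ih =>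
    set E := extProd σ τ - extProd τ σ with hE
    have diag_eq_zero {H : RTwo} (hH : H ∈ dvdSaturation E (extProd τ τ)) : diag H = 0 :=
      map_eq_zero_of_mem_dvdSaturation (diag : RTwo →ₐ[ℂ] ROdd).toRingHom
        (by simp [hE, diag_extProd, mul_comm]) (by simp [diag_extProd, hτ]) hH
    have stable : ∀ j ≤ 2 * i, ∀ H ∈ (dvdSaturation E (extProd τ τ)).restrictScalars ℂ,
        bSeq j H ∈ (dvdSaturation E (extProd τ τ)).restrictScalars ℂ := by
      refine fun j hj H hH => bSeq_apply_mem fun l hl => ?_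
      have hl' := ih l (by omega)
      exact ⟨derivation_mem_dvdSaturation _ (extProd_sub_extProd_dvd_pderiv_inl hl') hH,
        derivation_mem_dvdSaturation _ (extProd_sub_extProd_dvd_pderiv_inr hl') hH⟩
    have schur_E : diag (schur bSeq (2 * i + 1) E) = 0 := by
      rw [hE, ← swapVars_extProd σ τ, map_sub, map_sub, diag_schur_bSeq_swapVars, h i, smul_zero,
        sub_zero]
    have bSeq_E := diag_eq_zero (schur_succ_apply_sub_mem stable (self_mem_dvdSaturation E _))
    rw [map_sub, schur_E, zero_sub, neg_eq_zero, hE, diag_bSeq_odd_extProd_sub] at bSeq_E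
    have hc : (4 / (2 * i + 1 : ℕ) : ℂ) ≠ 0 :=
      div_ne_zero (by norm_num) (Nat.cast_ne_zero.mpr (Nat.succ_ne_zero _))
    exact (sub_eq_zero.mp ((smul_eq_zero.mp bSeq_E).resolve_left hc)).symm

theorem sawada_kotera_tau_independent_general {m : ℕ} (hm : Odd m) {τ : ROdd}
    (hBKP : OmegaNeg 0 τ = doubling τ) (hred : OmegaNeg m τ = 0) :
    pderiv ((m - 1) / 2) τ = 0 := by
  obtain ⟨i, rfl⟩ := hm
  rw [Nat.add_sub_cancel, Nat.mul_div_cancel_left i two_pos]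
  obtain rfl | hτ := eq_or_ne τ 0
  · exact map_zero _
  rw [omegaNeg_eq_omegaOp, doubling_eq_extProd] at hBKP
  rw [omegaNeg_eq_omegaOp] at hred
  have bilinear := omegaOp_zero_pderiv_inl hBKP hred
  rw [pderiv_inl_extProd] at bilinear
  have proportional := pderiv_mul_eq_mul_pderiv hτ (diag_schur_bSeq_odd_eq_zero bilinear) i
  exact derivation_eq_zero_of_mul_eq_sq (A := ROdd) (pderiv i)
    (exists_iterate_pderiv_eq_zero i τ) proportional

end BKP

/-- for odd `n ≥ 3`, a nonzero polynomial tau-function of the `n`-th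
Sawada-Kotera hierarchy (a BKP tau-function with `Ω_{-pn}(τ) = 0` for all `p ≥ 1`)
satisfies `∂τ/∂t_{(2j-1)n} = 0` for all `j ≥ 1`.
Here `t_{(2j-1)n}` is variable `((2j-1)n - 1)/2` of `ROdd`. -/
theorem sawada_kotera_tau_independent (n : ℕ) (hodd : Odd n) (hn : 3 ≤ n) (τ : ROdd)
    (hτ : τ ≠ 0) (hBKP : OmegaNeg 0 τ = doubling τ)
    (hred : ∀ p : ℕ, 1 ≤ p → OmegaNeg (p * n) τ = 0) :
    ∀ j : ℕ, 1 ≤ j → MvPolynomial.pderiv (((2 * j - 1) * n - 1) / 2) τ = 0 :=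
  fun j hj => sawada_kotera_tau_independent_general
    (Odd.mul ⟨j - 1, by omega⟩ hodd) hBKP (hred (2 * j - 1) (by omega))
end
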